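/- Let τ ∈ iℝ_{>0}, so 0 < q = exp(2πiτ) < 1, and let μ, x ∈ ℂ. Then 1 + 2·∑_{m=1}^{∞} cos(2πmτμ)·cos(2πmτx)·q^{m²} = ( (q²;q²)_∞ / 2 )·( ϑ(μ+x) + ϑ(μ−x) ), where ϑ(x) = (−q^{1+x}, −q^{1−x}; q²)_∞. Equivalently, the Askey–Wilson function at the self-dual parameters (a,b,c,d) = (0, 1/(2τ), 1, 1−1/(2τ)), which is given by 𝔈₀⁺(μ,x) = [ (−q,−q,−q,q,−q²;q²)_∞ / ( (q²;q²)_∞·ϑ(μ)·ϑ(x) ) ]·( 1 + 2·∑_{m=1}^{∞} cos(2πmτμ)·cos(2πmτx)·q^{m²} ), equals the elliptic cosine kernel: 𝔈₀⁺(μ,x) = ( (−q,−q;q²)_∞ / 2 )·( ϑ(μ+x) + ϑ(μ−x) ) / ( ϑ(μ)·ϑ(x) ) at all points where ϑ(μ)·ϑ(x) ≠ 0. -/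

import Mathlib

noncomputable section

open Complex

/-- `q^u = exp(2πiτu)`. -/
def qpow (τ u : ℂ) : ℂ := Complex.exp (2 * (Real.pi : ℂ) * Complex.I * τ * u)

/-- `(b;Q)_∞ = ∏_{n≥0}(1 − b·Qⁿ)`. -/
def pochInf (Q b : ℂ) : ℂ := ∏' n : ℕ, (1 - b * Q ^ n)

/-- The renormalized Jacobi theta function `ϑ(x) = (−q^{1+x}, −q^{1−x}; q²)_∞`. -/
def jTheta (τ x : ℂ) : ℂ :=
  pochInf (qpow τ 2) (-qpow τ (1 + x)) * pochInf (qpow τ 2) (-qpow τ (1 - x))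

/-- The kernel `1 + 2·∑_{m≥1} cos(2πmτμ)·cos(2πmτx)·q^{m²}`. -/
def cosKernel (τ mu x : ℂ) : ℂ :=
  1 + 2 * ∑' m : ℕ,
    Complex.cos (2 * (Real.pi : ℂ) * ((m : ℂ) + 1) * τ * mu) *
      Complex.cos (2 * (Real.pi : ℂ) * ((m : ℂ) + 1) * τ * x) *
      qpow τ (((m : ℂ) + 1) ^ 2)

/-- The Askey-Wilson function `𝔈₀⁺(μ,x)` at the self-dual parameters
`(a,b,c,d) = (0, 1/(2τ), 1, 1−1/(2τ))`. -/
def E0plus (τ mu x : ℂ) : ℂ :=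
  (pochInf (qpow τ 2) (-qpow τ 1) * pochInf (qpow τ 2) (-qpow τ 1) *
      pochInf (qpow τ 2) (-qpow τ 1) * pochInf (qpow τ 2) (qpow τ 1) *
      pochInf (qpow τ 2) (-qpow τ 2)) /
    (pochInf (qpow τ 2) (qpow τ 2) * jTheta τ mu * jTheta τ x) * cosKernel τ mu x

/-- finite `(Q;Q)_n` -/
def qfac (Q : ℂ) (n : ℕ) : ℂ := ∏ i ∈ Finset.range n, (1 - Q ^ (i + 1))

/-- `1/(Q;Q)_m`, zero for negative `m` -/
def gInv (Q : ℂ) (m : ℤ) : ℂ := if m < 0 then 0 else (qfac Q m.toNat)⁻¹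

lemma one_sub_pow_ne {Q : ℂ} (hQ : ‖Q‖ < 1) (n : ℕ) : 1 - Q ^ (n + 1) ≠ 0 := by
  intro h
  have h1 : Q ^ (n + 1) = 1 := (sub_eq_zero.mp h).symm
  have h2 : ‖Q‖ ^ (n + 1) = 1 := by rw [← norm_pow, h1, norm_one]
  have h3 := pow_lt_one₀ (norm_nonneg Q) hQ (Nat.succ_ne_zero n)
  simp only [Nat.succ_eq_add_one] at h3
  linarith

lemma qfac_ne {Q : ℂ} (hQ : ‖Q‖ < 1) (n : ℕ) : qfac Q n ≠ 0 :=
  Finset.prod_ne_zero_iff.mpr fun i _ => one_sub_pow_ne hQ i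

lemma gInv_rec {Q : ℂ} (hQ : ‖Q‖ < 1) (m : ℤ) :
    gInv Q m = (1 - Q ^ (m + 1)) * gInv Q (m + 1) := by
  rcases lt_trichotomy m (-1) with h | h | h
  · simp [gInv, show m < 0 by omega, show m + 1 < 0 by omega]
  · subst h; simp [gInv]
  · obtain ⟨n, rfl⟩ := Int.eq_ofNat_of_zero_le (show 0 ≤ m by omega)
    have e : ((n : ℤ) + 1) = ((n + 1 : ℕ) : ℤ) := by push_cast; rfl
    rw [e]
    simp only [gInv, Int.toNat_natCast, zpow_natCast]
    rw [if_neg (by omega), if_neg (by omega)]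
    have h1 := qfac_ne hQ n
    have h2 := one_sub_pow_ne hQ n
    rw [qfac, qfac, Finset.prod_range_succ, ← qfac]
    field_simp

/-- coefficients of the finite triple product -/
def jA (q : ℂ) (n : ℕ) (k : ℤ) : ℂ :=
  qfac (q ^ 2) (2 * n) * (gInv (q ^ 2) (n - k) * gInv (q ^ 2) (n + k)) * q ^ (k * k)

lemma jA_rec {q : ℂ} (hq0 : q ≠ 0) (hQ : ‖q ^ 2‖ < 1) (n : ℕ) (k : ℤ) :
    jA q (n + 1) k = (1 + q ^ (4 * n + 2)) * jA q n k
      + q ^ (2 * n + 1) * (jA q n (k - 1) + jA q n (k + 1)) := by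
  unfold jA
  have a1 := gInv_rec hQ (n - k)
  have b1 := gInv_rec hQ (n + k)
  have a0 := gInv_rec hQ (n - k - 1)
  have b0 := gInv_rec hQ (n + k - 1)
  rw [sub_add_cancel] at a0 b0
  rw [a1] at a0
  rw [b1] at b0
  rw [show ((n + 1 : ℕ) : ℤ) - k = n - k + 1 by push_cast; ring,
    show ((n + 1 : ℕ) : ℤ) + k = n + k + 1 by push_cast; ring,
    show (n : ℤ) - (k - 1) = n - k + 1 by ring,
    show (n : ℤ) + (k - 1) = n + k - 1 by ring,
    show (n : ℤ) - (k + 1) = n - k - 1 by ring,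
    show (n : ℤ) + (k + 1) = n + k + 1 by ring, a0, b0, a1, b1]
  generalize gInv (q ^ 2) (n - k + 1) = A
  generalize gInv (q ^ 2) (n + k + 1) = B
  have hf : qfac (q ^ 2) (2 * (n + 1)) = qfac (q ^ 2) (2 * n) *
      (1 - (q ^ 2) ^ (2 * n + 1)) * (1 - (q ^ 2) ^ (2 * n + 2)) := by
    rw [show 2 * (n + 1) = 2 * n + 1 + 1 by ring, qfac, Finset.prod_range_succ,
      Finset.prod_range_succ, ← qfac]
  rw [hf]
  have hQ0 : q ^ 2 ≠ 0 := pow_ne_zero 2 hq0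
  obtain ⟨X, hX⟩ : ∃ X, X = q ^ n := ⟨_, rfl⟩
  obtain ⟨Y, hY⟩ : ∃ Y, Y = q ^ k := ⟨_, rfl⟩
  have hX0 : X ≠ 0 := hX ▸ pow_ne_zero _ hq0
  have hY0 : Y ≠ 0 := hY ▸ zpow_ne_zero _ hq0
  have e2 : ∀ m : ℤ, (q ^ 2) ^ m = (q ^ m) ^ 2 := fun m => by
    rw [← zpow_natCast q 2, ← zpow_mul, mul_comm, zpow_mul, zpow_natCast]
  have c1 : (q ^ 2) ^ ((n : ℤ) - k) = X ^ 2 / Y ^ 2 := by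
    rw [e2, zpow_sub₀ hq0, zpow_natCast, ← hX, ← hY, div_pow]
  have c2 : (q ^ 2) ^ ((n : ℤ) + k) = X ^ 2 * Y ^ 2 := by
    rw [e2, zpow_add₀ hq0, zpow_natCast, ← hX, ← hY, mul_pow]
  have c3 : q ^ ((k - 1) * (k - 1)) = q ^ (k * k) / Y ^ 2 * q := by
    rw [show (k - 1) * (k - 1) = k * k - (k + k) + 1 by ring, zpow_add₀ hq0, zpow_sub₀ hq0,
      zpow_add₀ hq0 k k, ← hY, zpow_one, pow_two]
  have c4 : q ^ ((k + 1) * (k + 1)) = q ^ (k * k) * Y ^ 2 * q := by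
    rw [show (k + 1) * (k + 1) = k * k + (k + k) + 1 by ring, zpow_add₀ hq0, zpow_add₀ hq0,
      zpow_add₀ hq0 k k, ← hY, zpow_one, pow_two]
  rw [zpow_add₀ hQ0, zpow_add₀ hQ0, zpow_one, c1, c2, c3, c4]
  have d1 : q ^ (4 * n + 2) = X ^ 4 * q ^ 2 := by rw [hX]; ring
  have d2 : q ^ (2 * n + 1) = X ^ 2 * q := by rw [hX]; ring
  have d3 : (q ^ 2) ^ (2 * n + 1) = X ^ 4 * q ^ 2 := by rw [hX]; ring
  have d4 : (q ^ 2) ^ (2 * n + 2) = X ^ 4 * q ^ 4 := by rw [hX]; ring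
  rw [d1, d2, d3, d4]
  field_simp
  ring

lemma jA_zero (q : ℂ) (k : ℤ) : jA q 0 k = if k = 0 then 1 else 0 := by
  unfold jA gInv
  by_cases h : k = 0
  · subst h; simp [qfac]
  · rcases lt_or_gt_of_ne h with h | h
    · simp [h, h.ne]
    · simp [h, h.ne']

lemma HasSum.congr_aux {β : Type} {f g : β → ℂ} {a b : ℂ} (h : HasSum g b)
    (hf : ∀ k, f k = g k) (hab : a = b) : HasSum f a := by
  rw [funext hf, hab]; exact h

lemma finite_jtp {q z : ℂ} (hq0 : q ≠ 0) (hz : z ≠ 0) (hQ : ‖q ^ 2‖ < 1) (n : ℕ) :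
    HasSum (fun k : ℤ => jA q n k * z ^ k)
      (∏ i ∈ Finset.range n, ((1 + q ^ (2 * i + 1) * z) * (1 + q ^ (2 * i + 1) * z⁻¹))) := by
  induction n with
  | zero =>
    simp only [jA_zero, Finset.range_zero, Finset.prod_empty]
    convert hasSum_ite_eq (0 : ℤ) (1 : ℂ) using 2 with k
    split_ifs with h <;> simp [h]
  | succ n ih =>
    rw [Finset.prod_range_succ]
    generalize (∏ i ∈ Finset.range n,
      ((1 + q ^ (2 * i + 1) * z) * (1 + q ^ (2 * i + 1) * z⁻¹))) = P at ih ⊢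
    have h1 := (((Equiv.subRight (1 : ℤ)).hasSum_iff).mpr ih).mul_left (q ^ (2 * n + 1) * z)
    have h2 := (((Equiv.addRight (1 : ℤ)).hasSum_iff).mpr ih).mul_left (q ^ (2 * n + 1) * z⁻¹)
    have h0 := ih.mul_left (1 + q ^ (4 * n + 2))
    have h3 := (h0.add h1).add h2
    refine HasSum.congr_aux h3 (fun k => ?_) ?_
    · simp only [Function.comp, Equiv.subRight_apply, Equiv.coe_addRight]
      rw [jA_rec hq0 hQ, zpow_sub_one₀ hz, zpow_add_one₀ hz]
      field_simp
      ring
    · field_simp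
      ring

lemma summable_geo {Q : ℂ} (hQ : ‖Q‖ < 1) (b : ℂ) : Summable fun n : ℕ => ‖-(b * Q ^ n)‖ := by
  simp only [norm_neg, norm_mul, norm_pow]
  exact (summable_geometric_of_lt_one (norm_nonneg _) hQ).mul_left _

lemma mult_poch {Q : ℂ} (hQ : ‖Q‖ < 1) (b : ℂ) : Multipliable fun n : ℕ => 1 - b * Q ^ n := by
  simpa only [← sub_eq_add_neg] using multipliable_one_add_of_summable (summable_geo hQ b)

lemma poch_ne {Q : ℂ} (hQ : ‖Q‖ < 1) : pochInf Q Q ≠ 0 := by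
  unfold pochInf
  have := tprod_one_add_ne_zero_of_summable (f := fun n : ℕ => -(Q * Q ^ n)) (fun n => by
    have := one_sub_pow_ne hQ n
    rwa [pow_succ', sub_eq_add_neg] at this) (summable_geo hQ Q)
  simpa only [← sub_eq_add_neg] using this

lemma qfac_tendsto {Q : ℂ} (hQ : ‖Q‖ < 1) :
    Filter.Tendsto (qfac Q) Filter.atTop (nhds (pochInf Q Q)) := by
  have := (mult_poch hQ Q).tendsto_prod_tprod_nat
  refine this.congr fun n => ?_
  simp only [qfac, pow_succ']

lemma toNat_tendsto : Filter.Tendsto Int.toNat Filter.atTop Filter.atTop :=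
  Filter.tendsto_atTop.mpr fun n => by
    filter_upwards [Filter.eventually_ge_atTop (n : ℤ)] with m hm
    omega

lemma gInv_tendsto {Q : ℂ} (hQ : ‖Q‖ < 1) :
    Filter.Tendsto (gInv Q) Filter.atTop (nhds (pochInf Q Q)⁻¹) := by
  have h := ((qfac_tendsto hQ).inv₀ (poch_ne hQ)).comp toNat_tendsto
  refine h.congr' ?_
  filter_upwards [Filter.eventually_ge_atTop 0] with m hm
  simp [gInv, not_lt.mpr hm]

lemma qfac_bdd {Q : ℂ} (hQ : ‖Q‖ < 1) : ∃ C, ∀ n, ‖qfac Q n‖ ≤ C := by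
  obtain ⟨C, hC⟩ := (Metric.isBounded_range_of_tendsto _ (qfac_tendsto hQ)).exists_norm_le
  exact ⟨C, fun n => hC _ ⟨n, rfl⟩⟩

lemma gInv_bdd {Q : ℂ} (hQ : ‖Q‖ < 1) : ∃ C, ∀ n, ‖gInv Q n‖ ≤ C := by
  obtain ⟨C, hC⟩ := (Metric.isBounded_range_of_tendsto _
    ((qfac_tendsto hQ).inv₀ (poch_ne hQ))).exists_norm_le
  have h0 : 0 ≤ C := (norm_nonneg _).trans (hC _ ⟨0, rfl⟩)
  refine ⟨C, fun n => ?_⟩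
  unfold gInv
  split_ifs
  · simpa using h0
  · exact hC _ ⟨_, rfl⟩

lemma jtp {q z : ℂ} (hq0 : q ≠ 0) (hz : z ≠ 0) (hQ : ‖q ^ 2‖ < 1)
    (hs : Summable fun k : ℤ => ‖q ^ (k * k) * z ^ k‖) :
    HasSum (fun k : ℤ => q ^ (k * k) * z ^ k)
      (pochInf (q ^ 2) (q ^ 2) * (pochInf (q ^ 2) (-(q * z)) * pochInf (q ^ 2) (-(q * z⁻¹)))) := by
  obtain ⟨C, hC⟩ := qfac_bdd hQ
  obtain ⟨D, hD⟩ := gInv_bdd hQ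
  have hC0 : 0 ≤ C := (norm_nonneg _).trans (hC 0)
  have hD0 : 0 ≤ D := (norm_nonneg _).trans (hD 0)
  have hP := poch_ne hQ
  have key := tendsto_tsum_of_dominated_convergence (𝓕 := Filter.atTop)
    (f := fun (n : ℕ) (k : ℤ) => jA q n k * z ^ k)
    (g := fun k : ℤ => (pochInf (q ^ 2) (q ^ 2))⁻¹ * (q ^ (k * k) * z ^ k))
    (bound := fun k : ℤ => C * (D * D) * ‖q ^ (k * k) * z ^ k‖) (hs.mul_left _)
    (by
      intro k
      have t1 : Filter.Tendsto (fun n : ℕ => qfac (q ^ 2) (2 * n)) Filter.atTop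
          (nhds (pochInf (q ^ 2) (q ^ 2))) :=
        (qfac_tendsto hQ).comp (Filter.tendsto_id.const_mul_atTop' two_pos)
      have t2 : Filter.Tendsto (fun n : ℕ => gInv (q ^ 2) (n - k)) Filter.atTop
          (nhds (pochInf (q ^ 2) (q ^ 2))⁻¹) :=
        (gInv_tendsto hQ).comp
          (Filter.tendsto_atTop_add_const_right _ (-k) tendsto_natCast_atTop_atTop)
      have t3 : Filter.Tendsto (fun n : ℕ => gInv (q ^ 2) (n + k)) Filter.atTop
          (nhds (pochInf (q ^ 2) (q ^ 2))⁻¹) :=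
        (gInv_tendsto hQ).comp
          (Filter.tendsto_atTop_add_const_right _ k tendsto_natCast_atTop_atTop)
      have := ((t1.mul (t2.mul t3)).mul_const (q ^ (k * k))).mul_const (z ^ k)
      have e : (pochInf (q ^ 2) (q ^ 2))⁻¹ * (q ^ (k * k) * z ^ k) =
          pochInf (q ^ 2) (q ^ 2) * ((pochInf (q ^ 2) (q ^ 2))⁻¹ * (pochInf (q ^ 2) (q ^ 2))⁻¹) *
            q ^ (k * k) * z ^ k := by
        rw [mul_inv_cancel_left₀ hP, mul_assoc]
      rw [e]
      exact this)
    (by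
      refine Filter.Eventually.of_forall fun n k => ?_
      unfold jA
      rw [mul_assoc, norm_mul, norm_mul, norm_mul (gInv _ _)]
      gcongr
      · exact hC _
      · exact hD _
      · exact hD _)
  have lim2 : Filter.Tendsto (fun n => ∏ i ∈ Finset.range n,
      ((1 + q ^ (2 * i + 1) * z) * (1 + q ^ (2 * i + 1) * z⁻¹))) Filter.atTop
      (nhds (pochInf (q ^ 2) (-(q * z)) * pochInf (q ^ 2) (-(q * z⁻¹)))) := by
    have := (mult_poch hQ (-(q * z))).tendsto_prod_tprod_nat.mul
      (mult_poch hQ (-(q * z⁻¹))).tendsto_prod_tprod_nat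
    refine this.congr fun n => ?_
    rw [← Finset.prod_mul_distrib]
    refine Finset.prod_congr rfl fun i _ => ?_
    rw [← pow_mul]
    ring
  simp only [(finite_jtp hq0 hz hQ _).tsum_eq] at key
  have e := tendsto_nhds_unique lim2 key
  rw [tsum_mul_left] at e
  rw [e, mul_inv_cancel_left₀ hP]
  exact hs.of_norm.hasSum

lemma euler_poch {q : ℂ} (hQ : ‖q ^ 2‖ < 1) :
    pochInf (q ^ 2) (-q) * pochInf (q ^ 2) q * pochInf (q ^ 2) (-q ^ 2) = 1 := by
  have hP := poch_ne hQ
  have hQ4 : ‖(q ^ 2) ^ 2‖ < 1 := by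
    rw [norm_pow]; exact pow_lt_one₀ (norm_nonneg _) hQ two_ne_zero
  have h1 : pochInf (q ^ 2) (-q) * pochInf (q ^ 2) q = pochInf ((q ^ 2) ^ 2) (q ^ 2) := by
    unfold pochInf
    rw [← (mult_poch hQ _).tprod_mul (mult_poch hQ _)]
    refine tprod_congr fun n => ?_
    rw [← pow_mul (q ^ 2) 2 n]; ring
  have h2 : pochInf (q ^ 2) (-q ^ 2) * pochInf (q ^ 2) (q ^ 2) =
      pochInf ((q ^ 2) ^ 2) ((q ^ 2) ^ 2) := by
    unfold pochInf
    rw [← (mult_poch hQ _).tprod_mul (mult_poch hQ _)]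
    refine tprod_congr fun n => ?_
    rw [← pow_mul (q ^ 2) 2 n]; ring
  have h3 : pochInf ((q ^ 2) ^ 2) (q ^ 2) * pochInf ((q ^ 2) ^ 2) ((q ^ 2) ^ 2) =
      pochInf (q ^ 2) (q ^ 2) := by
    generalize q ^ 2 = Q at hQ4
    have a := mult_poch hQ4 Q
    have b := mult_poch hQ4 (Q ^ 2)
    have ea : ∀ n : ℕ, Q * (Q ^ 2) ^ n = Q ^ (2 * n + 1) := fun n => by
      rw [pow_succ' Q (2 * n), pow_mul]
    have eb : ∀ n : ℕ, Q ^ 2 * (Q ^ 2) ^ n = Q ^ (2 * n + 1 + 1) := fun n => by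
      rw [add_assoc, pow_add, pow_mul, mul_comm]
    unfold pochInf
    simp only [ea] at a ⊢
    simp only [eb] at b ⊢
    have := tprod_even_mul_odd (f := fun n : ℕ => 1 - Q ^ (n + 1)) a b
    rw [this]
    exact tprod_congr fun n => by rw [pow_succ']
  apply mul_right_cancel₀ hP
  rw [h1, mul_assoc, h2, h3, one_mul]

lemma qpow_add (τ a b : ℂ) : qpow τ (a + b) = qpow τ a * qpow τ b := by
  unfold qpow; rw [← Complex.exp_add]; ring_nf

lemma qpow_two (τ : ℂ) : qpow τ 2 = qpow τ 1 ^ 2 := by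
  rw [pow_two, ← qpow_add]; norm_num

lemma qpow_sq_lt {t : ℝ} (ht : 0 < t) {τ : ℂ} (hτ : τ = Complex.I * (t : ℂ)) :
    ‖qpow τ 1 ^ 2‖ < 1 := by
  rw [← qpow_two, qpow, Complex.norm_exp, Real.exp_lt_one_iff, hτ]
  have : 2 * (Real.pi : ℂ) * Complex.I * (Complex.I * (t : ℂ)) * 2 =
      ((-(4 * Real.pi * t) : ℝ) : ℂ) := by
    push_cast
    linear_combination (4 * (Real.pi : ℂ) * t) * Complex.I_mul_I
  rw [this, Complex.ofReal_re]
  have := mul_pos Real.pi_pos ht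
  linarith

lemma theta_hasSum {t : ℝ} (ht : 0 < t) {τ : ℂ} (hτ : τ = Complex.I * (t : ℂ)) (y : ℂ) :
    HasSum (fun m : ℕ => 2 * (Complex.cos (2 * (Real.pi : ℂ) * ((m : ℂ) + 1) * τ * y) *
      qpow τ (((m : ℂ) + 1) ^ 2)))
      (pochInf (qpow τ 2) (qpow τ 2) * jTheta τ y - 1) := by
  have hQ := qpow_sq_lt ht hτ
  have hterm : ∀ k : ℤ, qpow τ 1 ^ (k * k) * qpow τ y ^ k =
      jacobiTheta₂_term k (τ * y) (2 * τ) := fun k => by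
    unfold qpow jacobiTheta₂_term
    rw [← Complex.exp_int_mul, ← Complex.exp_int_mul, ← Complex.exp_add]
    push_cast
    ring_nf
  have hs : Summable fun k : ℤ => ‖qpow τ 1 ^ (k * k) * qpow τ y ^ k‖ := by
    simp only [hterm]
    refine Summable.norm ((summable_jacobiTheta₂_term_iff _ _).mpr ?_)
    rw [hτ]; simpa using ht
  have h := jtp (q := qpow τ 1) (z := qpow τ y) (Complex.exp_ne_zero _) (Complex.exp_ne_zero _)
    hQ hs
  have hinv : (qpow τ y)⁻¹ = qpow τ (-y) := by
    unfold qpow; rw [← Complex.exp_neg]; ring_nf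
  have hval : pochInf (qpow τ 1 ^ 2) (qpow τ 1 ^ 2) *
      (pochInf (qpow τ 1 ^ 2) (-(qpow τ 1 * qpow τ y)) *
        pochInf (qpow τ 1 ^ 2) (-(qpow τ 1 * (qpow τ y)⁻¹))) =
      pochInf (qpow τ 2) (qpow τ 2) * jTheta τ y := by
    rw [jTheta, hinv, ← qpow_add, ← qpow_add, ← qpow_two, ← sub_eq_add_neg]
  rw [hval] at h
  have h2 := (hasSum_nat_add_iff' 1).mpr h.nat_add_neg
  refine HasSum.congr_aux h2 (fun m => ?_) ?_
  · unfold qpow Complex.cos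
    rw [← Complex.exp_int_mul, ← Complex.exp_int_mul, ← Complex.exp_int_mul,
      ← Complex.exp_int_mul, ← Complex.exp_add, ← Complex.exp_add]
    have e1 : ∀ a b c : ℂ, 2 * ((Complex.exp a + Complex.exp b) / 2 * Complex.exp c) =
        Complex.exp (c + a) + Complex.exp (c + b) := fun a b c => by
      rw [Complex.exp_add, Complex.exp_add]; ring
    rw [e1]
    push_cast
    congr 2 <;> ring
  · simp

/-- The theta-expansion of the cosine kernel and the identification of the Askey-Wilson
function at the self-dual parameters with the elliptic cosine kernel:
`𝔈₀⁺(μ,x) = ((−q,−q;q²)_∞/2)·(ϑ(μ+x)+ϑ(μ−x))/(ϑ(μ)ϑ(x))`. -/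
theorem askey_wilson_function_elliptic_cosine (t : ℝ) (ht : 0 < t) (τ : ℂ)
    (hτ : τ = Complex.I * (t : ℂ)) :
    (∀ mu x : ℂ, cosKernel τ mu x =
      (pochInf (qpow τ 2) (qpow τ 2) / 2) * (jTheta τ (mu + x) + jTheta τ (mu - x))) ∧
    (∀ mu x : ℂ, jTheta τ mu * jTheta τ x ≠ 0 →
      E0plus τ mu x =
        (pochInf (qpow τ 2) (-qpow τ 1) * pochInf (qpow τ 2) (-qpow τ 1) / 2) *
          (jTheta τ (mu + x) + jTheta τ (mu - x)) / (jTheta τ mu * jTheta τ x)) := by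
  have hQ := qpow_sq_lt ht hτ
  have part1 : ∀ mu x : ℂ, cosKernel τ mu x =
      (pochInf (qpow τ 2) (qpow τ 2) / 2) * (jTheta τ (mu + x) + jTheta τ (mu - x)) := by
    intro mu x
    have h := ((theta_hasSum ht hτ (mu + x)).add (theta_hasSum ht hτ (mu - x))).mul_left (1 / 4)
    have e : ∀ m : ℕ, Complex.cos (2 * (Real.pi : ℂ) * ((m : ℂ) + 1) * τ * mu) *
        Complex.cos (2 * (Real.pi : ℂ) * ((m : ℂ) + 1) * τ * x) * qpow τ (((m : ℂ) + 1) ^ 2) =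
        1 / 4 * (2 * (Complex.cos (2 * (Real.pi : ℂ) * ((m : ℂ) + 1) * τ * (mu + x)) *
          qpow τ (((m : ℂ) + 1) ^ 2)) +
          2 * (Complex.cos (2 * (Real.pi : ℂ) * ((m : ℂ) + 1) * τ * (mu - x)) *
          qpow τ (((m : ℂ) + 1) ^ 2))) := fun m => by
      rw [mul_add _ mu x, mul_sub _ mu x, Complex.cos_add, Complex.cos_sub]
      ring
    unfold cosKernel
    simp only [e]
    rw [h.tsum_eq]
    ring
  refine ⟨part1, fun mu x hne => ?_⟩
  have hP : pochInf (qpow τ 2) (qpow τ 2) ≠ 0 := by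
    rw [qpow_two]; exact poch_ne hQ
  have he : pochInf (qpow τ 2) (-qpow τ 1) * pochInf (qpow τ 2) (qpow τ 1) *
      pochInf (qpow τ 2) (-qpow τ 2) = 1 := by
    rw [qpow_two]; exact euler_poch hQ
  obtain ⟨h1, h2⟩ := mul_ne_zero_iff.mp hne
  rw [E0plus, part1]
  generalize pochInf (qpow τ 2) (-qpow τ 1) = a at *
  generalize pochInf (qpow τ 2) (qpow τ 1) = b at *
  generalize pochInf (qpow τ 2) (-qpow τ 2) = c at *
  generalize pochInf (qpow τ 2) (qpow τ 2) = d at *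
  field_simp
  linear_combination (a ^ 2 * (jTheta τ (mu + x) + jTheta τ (mu - x))) * he
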